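/- arXiv:2403.07348 — 5 statements merged into one kernel-verified Lean document; each statement's English description precedes it below -/
import Mathlib

section
/- Every element of the group K (the subgroup of ℝ-linear isometries of ℍ generated by k₁ : x ↦ −x̄ i and k₂ : x ↦ −j x̄ k) has a real eigenvalue: for every g ∈ K there exist a nonzero x ∈ ℍ and a real number c with g(x) = c·x. -/
open Quaternion

noncomputable section

def qi : ℍ[ℝ] := ⟨0, 1, 0, 0⟩
def qj : ℍ[ℝ] := ⟨0, 0, 1, 0⟩
def qk : ℍ[ℝ] := ⟨0, 0, 0, 1⟩

lemma norm_qi : ‖qi‖ = 1 := by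
  have h : normSq qi = 1 := by rw [Quaternion.normSq_def']; simp [qi]
  have h2 := Quaternion.normSq_eq_norm_mul_self qi
  nlinarith [norm_nonneg qi]

lemma norm_qj : ‖qj‖ = 1 := by
  have h : normSq qj = 1 := by rw [Quaternion.normSq_def']; simp [qj]
  have h2 := Quaternion.normSq_eq_norm_mul_self qj
  nlinarith [norm_nonneg qj]

lemma norm_qk : ‖qk‖ = 1 := by
  have h : normSq qk = 1 := by rw [Quaternion.normSq_def']; simp [qk]
  have h2 := Quaternion.normSq_eq_norm_mul_self qk
  nlinarith [norm_nonneg qk]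

/-- Build a linear isometry equivalence of `ℍ[ℝ]` from a norm-preserving linear map. -/
def toIso (f : ℍ[ℝ] →ₗ[ℝ] ℍ[ℝ]) (h : ∀ x, ‖f x‖ = ‖x‖) : ℍ[ℝ] ≃ₗᵢ[ℝ] ℍ[ℝ] :=
  LinearIsometryEquiv.ofSurjective ⟨f, h⟩
    (LinearMap.injective_iff_surjective.mp (LinearIsometry.injective ⟨f, h⟩))

/-- k₁ : x ↦ −x̄ i -/
def k1 : ℍ[ℝ] ≃ₗᵢ[ℝ] ℍ[ℝ] :=
  toIso
    { toFun := fun x => -(star x * qi)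
      map_add' := fun x y => by simp [star_add, add_mul, add_comm]
      map_smul' := fun r x => by simp [Quaternion.star_smul, smul_mul_assoc] }
    (fun x => by simp [norm_mul, Quaternion.norm_star, norm_qi])

/-- k₂ : x ↦ −j x̄ k -/
def k2 : ℍ[ℝ] ≃ₗᵢ[ℝ] ℍ[ℝ] :=
  toIso
    { toFun := fun x => -(qj * star x * qk)
      map_add' := fun x y => by simp [star_add, mul_add, add_mul, add_comm]
      map_smul' := fun r x => by
        simp [Quaternion.star_smul, smul_mul_assoc, mul_smul_comm] }
    (fun x => by simp [norm_mul, Quaternion.norm_star, norm_qj, norm_qk])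

@[simp] lemma k1_apply (x : ℍ[ℝ]) : k1 x = -(star x * qi) := rfl
@[simp] lemma k2_apply (x : ℍ[ℝ]) : k2 x = -(qj * star x * qk) := rfl

/-- The group `K`. -/
def K : Subgroup (ℍ[ℝ] ≃ₗᵢ[ℝ] ℍ[ℝ]) := Subgroup.closure {k1, k2}

/-- The quaternion with the given coordinates. -/
def mq (a b c d : ℝ) : ℍ[ℝ] := ⟨a, b, c, d⟩

@[simp] lemma mq_re (a b c d : ℝ) : (mq a b c d).re = a := rfl
@[simp] lemma mq_imI (a b c d : ℝ) : (mq a b c d).imI = b := rfl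
@[simp] lemma mq_imJ (a b c d : ℝ) : (mq a b c d).imJ = c := rfl
@[simp] lemma mq_imK (a b c d : ℝ) : (mq a b c d).imK = d := rfl

lemma qi_eq : qi = mq 0 1 0 0 := rfl
lemma qj_eq : qj = mq 0 0 1 0 := rfl
lemma qk_eq : qk = mq 0 0 0 1 := rfl

lemma k1_mk (a b c d : ℝ) : k1 (mq a b c d) = (mq (-b) (-a) d (-c)) := by
  rw [k1_apply]; ext <;> simp [qi_eq]

lemma k2_mk (a b c d : ℝ) : k2 (mq a b c d) = (mq b (-a) (-d) (-c)) := by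
  rw [k2_apply]; ext <;> simp [qj_eq, qk_eq]

lemma k1_inv_mk (a b c d : ℝ) : k1⁻¹ ((mq a b c d) : ℍ[ℝ]) = (mq (-b) (-a) (-d) c) := by
  change k1.symm _ = _
  rw [LinearIsometryEquiv.symm_apply_eq, k1_mk]; simp

lemma k2_inv_mk (a b c d : ℝ) : k2⁻¹ ((mq a b c d) : ℍ[ℝ]) = (mq (-b) a (-d) (-c)) := by
  change k2.symm _ = _
  rw [LinearIsometryEquiv.symm_apply_eq, k2_mk]; simp

/-- The four shapes of elements of `K`. -/
def Shape (g : ℍ[ℝ] ≃ₗᵢ[ℝ] ℍ[ℝ]) : Prop :=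
  ∃ e f : ℝ,
    (∀ a b c d : ℝ, g (mq a b c d) = (mq (e * a) (e * b) (f * c) (f * d))) ∨
    (∀ a b c d : ℝ, g (mq a b c d) = (mq (e * b) (e * a) (f * d) (-(f * c)))) ∨
    (∀ a b c d : ℝ, g (mq a b c d) = (mq (e * b) (-(e * a)) (f * d) (f * c))) ∨
    (∀ a b c d : ℝ, g (mq a b c d) = (mq (e * a) (-(e * b)) (f * c) (-(f * d))))

lemma shape_k1 {g : ℍ[ℝ] ≃ₗᵢ[ℝ] ℍ[ℝ]} (h : Shape g) : Shape (k1 * g) := by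
  obtain ⟨e, f, h | h | h | h⟩ := h
  · exact ⟨-e, f, Or.inr (Or.inl fun a b c d => by
      change k1 (g _) = _; rw [h, k1_mk]; simp)⟩
  · exact ⟨-e, -f, Or.inl fun a b c d => by
      change k1 (g _) = _; rw [h, k1_mk]; simp⟩
  · exact ⟨e, f, Or.inr (Or.inr (Or.inr fun a b c d => by
      change k1 (g _) = _; rw [h, k1_mk]; simp))⟩
  · exact ⟨e, -f, Or.inr (Or.inr (Or.inl fun a b c d => by
      change k1 (g _) = _; rw [h, k1_mk]; simp))⟩

lemma shape_k1_inv {g : ℍ[ℝ] ≃ₗᵢ[ℝ] ℍ[ℝ]} (h : Shape g) : Shape (k1⁻¹ * g) := by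
  obtain ⟨e, f, h | h | h | h⟩ := h
  · exact ⟨-e, -f, Or.inr (Or.inl fun a b c d => by
      change k1⁻¹ (g _) = _; rw [h, k1_inv_mk]; simp)⟩
  · exact ⟨-e, f, Or.inl fun a b c d => by
      change k1⁻¹ (g _) = _; rw [h, k1_inv_mk]; simp⟩
  · exact ⟨e, -f, Or.inr (Or.inr (Or.inr fun a b c d => by
      change k1⁻¹ (g _) = _; rw [h, k1_inv_mk]; simp))⟩
  · exact ⟨e, f, Or.inr (Or.inr (Or.inl fun a b c d => by
      change k1⁻¹ (g _) = _; rw [h, k1_inv_mk]; simp))⟩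

lemma shape_k2 {g : ℍ[ℝ] ≃ₗᵢ[ℝ] ℍ[ℝ]} (h : Shape g) : Shape (k2 * g) := by
  obtain ⟨e, f, h | h | h | h⟩ := h
  · exact ⟨e, -f, Or.inr (Or.inr (Or.inl fun a b c d => by
      change k2 (g _) = _; rw [h, k2_mk]; simp))⟩
  · exact ⟨e, f, Or.inr (Or.inr (Or.inr fun a b c d => by
      change k2 (g _) = _; rw [h, k2_mk]; simp))⟩
  · exact ⟨-e, -f, Or.inl fun a b c d => by
      change k2 (g _) = _; rw [h, k2_mk]; simp⟩
  · exact ⟨-e, f, Or.inr (Or.inl fun a b c d => by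
      change k2 (g _) = _; rw [h, k2_mk]; simp)⟩

lemma shape_k2_inv {g : ℍ[ℝ] ≃ₗᵢ[ℝ] ℍ[ℝ]} (h : Shape g) : Shape (k2⁻¹ * g) := by
  obtain ⟨e, f, h | h | h | h⟩ := h
  · exact ⟨-e, -f, Or.inr (Or.inr (Or.inl fun a b c d => by
      change k2⁻¹ (g _) = _; rw [h, k2_inv_mk]; simp))⟩
  · exact ⟨-e, f, Or.inr (Or.inr (Or.inr fun a b c d => by
      change k2⁻¹ (g _) = _; rw [h, k2_inv_mk]; simp))⟩
  · exact ⟨e, -f, Or.inl fun a b c d => by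
      change k2⁻¹ (g _) = _; rw [h, k2_inv_mk]; simp⟩
  · exact ⟨e, f, Or.inr (Or.inl fun a b c d => by
      change k2⁻¹ (g _) = _; rw [h, k2_inv_mk]; simp)⟩

lemma shape_of_mem {g : ℍ[ℝ] ≃ₗᵢ[ℝ] ℍ[ℝ]} (hg : g ∈ K) : Shape g := by
  unfold K at hg
  induction hg using Subgroup.closure_induction_left with
  | one => exact ⟨1, 1, Or.inl fun a b c d => by simp only [one_mul]; rfl⟩
  | mul_left x hx y _ ih =>
    rcases hx with rfl | rfl
    · exact shape_k1 ih
    · exact shape_k2 ih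
  | inv_mul_cancel x hx y _ ih =>
    rcases hx with rfl | rfl
    · exact shape_k1_inv ih
    · exact shape_k2_inv ih

/-- Every element of the group `K` generated by `k₁ : x ↦ −x̄ i` and `k₂ : x ↦ −j x̄ k`
has a real eigenvalue. -/
theorem stmt_4 : ∀ g ∈ K, ∃ x : ℍ[ℝ], x ≠ 0 ∧ ∃ c : ℝ, g x = c • x := by
  intro g hg
  obtain ⟨e, f, h | h | h | h⟩ := shape_of_mem hg
  · refine ⟨(mq 1 0 0 0), fun h0 => ?_, e, ?_⟩
    · simpa using congrArg (fun x : ℍ[ℝ] => x.re) h0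
    · rw [h]; ext <;> simp
  · refine ⟨(mq 1 1 0 0), fun h0 => ?_, e, ?_⟩
    · simpa using congrArg (fun x : ℍ[ℝ] => x.re) h0
    · rw [h]; ext <;> simp
  · refine ⟨(mq 0 0 1 1), fun h0 => ?_, f, ?_⟩
    · simpa using congrArg (fun x : ℍ[ℝ] => x.imJ) h0
    · rw [h]; ext <;> simp
  · refine ⟨(mq 1 0 0 0), fun h0 => ?_, e, ?_⟩
    · simpa using congrArg (fun x : ℍ[ℝ] => x.re) h0
    · rw [h]; ext <;> simp
end
end

section
/- There is no 1-dimensional ℝ-subspace of ℍ that is invariant under both k₁ : x ↦ −x̄ i and k₂ : x ↦ −j x̄ k; equivalently, there is no nonzero x ∈ ℍ such that k₁(x) ∈ ℝ·x and k₂(x) ∈ ℝ·x. In particular, no 1-dimensional subspace of ℍ is invariant under every element of the group K generated by k₁ and k₂. -/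
open Quaternion

noncomputable section

lemma no_common_eigen (x : ℍ[ℝ]) (hx : x ≠ 0) (c d : ℝ) (h1 : k1 x = c • x)
    (h2 : k2 x = d • x) : False := by
  rw [k1_apply] at h1
  rw [k2_apply] at h2
  rw [Quaternion.ext_iff] at h1 h2
  obtain ⟨a1, a2, a3, a4⟩ := h1
  obtain ⟨b1, b2, -, -⟩ := h2
  have hx' : ¬ (x.re = 0 ∧ x.imI = 0 ∧ x.imJ = 0 ∧ x.imK = 0) := fun h =>
    hx (Quaternion.ext _ _ h.1 h.2.1 h.2.2.1 h.2.2.2)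
  have i0 : qi.re = 0 ∧ qi.imI = 1 ∧ qi.imJ = 0 ∧ qi.imK = 0 := ⟨rfl, rfl, rfl, rfl⟩
  have j0 : qj.re = 0 ∧ qj.imI = 0 ∧ qj.imJ = 1 ∧ qj.imK = 0 := ⟨rfl, rfl, rfl, rfl⟩
  have k0 : qk.re = 0 ∧ qk.imI = 0 ∧ qk.imJ = 0 ∧ qk.imK = 1 := ⟨rfl, rfl, rfl, rfl⟩
  simp [Quaternion.re_mul, Quaternion.imI_mul, Quaternion.imJ_mul, Quaternion.imK_mul, i0, j0, k0]
    at a1 a2 a3 a4 b1 b2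
  generalize x.re = p at *
  generalize x.imI = q at *
  generalize x.imJ = r at *
  generalize x.imK = s at *
  have sq1 : r ^ 2 + s ^ 2 = 0 := by
    have e : (c ^ 2 + 1) * r = 0 := by linear_combination (-c) * a3 - a4
    have hr : r = 0 := (mul_eq_zero.mp e).resolve_left (by positivity)
    subst hr
    have : s = 0 := by linarith
    simp [this]
  have hr : r = 0 := by nlinarith [sq_nonneg r, sq_nonneg s]
  have hs : s = 0 := by nlinarith [sq_nonneg r, sq_nonneg s]
  have e : (d ^ 2 + 1) * p = 0 := by linear_combination (-d) * b1 - b2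
  have hp : p = 0 := (mul_eq_zero.mp e).resolve_left (by positivity)
  subst hp
  have hq : q = 0 := by linarith
  exact hx' ⟨rfl, hq, hr, hs⟩

lemma no_line (L : Submodule ℝ ℍ[ℝ]) (hL : Module.finrank ℝ L = 1)
    (h1 : L.map (k1.toLinearEquiv : ℍ[ℝ] →ₗ[ℝ] ℍ[ℝ]) = L)
    (h2 : L.map (k2.toLinearEquiv : ℍ[ℝ] →ₗ[ℝ] ℍ[ℝ]) = L) : False := by
  obtain ⟨v, hv, hspan⟩ := finrank_eq_one_iff'.mp hL
  have m1 : k1 (v : ℍ[ℝ]) ∈ L := by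
    have h := Submodule.mem_map_of_mem (f := (k1.toLinearEquiv : ℍ[ℝ] →ₗ[ℝ] ℍ[ℝ])) v.2
    rw [h1] at h
    exact h
  have m2 : k2 (v : ℍ[ℝ]) ∈ L := by
    have h := Submodule.mem_map_of_mem (f := (k2.toLinearEquiv : ℍ[ℝ] →ₗ[ℝ] ℍ[ℝ])) v.2
    rw [h2] at h
    exact h
  obtain ⟨c, hc⟩ := hspan ⟨_, m1⟩
  obtain ⟨d, hd⟩ := hspan ⟨_, m2⟩
  exact no_common_eigen v (fun h => hv (Subtype.ext h)) c d
    (congrArg Subtype.val hc).symm (congrArg Subtype.val hd).symm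

/-- There is no 1-dimensional ℝ-subspace of `ℍ` invariant under both `k₁` and `k₂`;
equivalently, no nonzero `x` with `k₁ x ∈ ℝ·x` and `k₂ x ∈ ℝ·x`; in particular no
1-dimensional subspace is invariant under every element of `K`. -/
theorem stmt_5 :
    (¬ ∃ L : Submodule ℝ ℍ[ℝ], Module.finrank ℝ L = 1 ∧
        L.map (k1.toLinearEquiv : ℍ[ℝ] →ₗ[ℝ] ℍ[ℝ]) = L ∧
        L.map (k2.toLinearEquiv : ℍ[ℝ] →ₗ[ℝ] ℍ[ℝ]) = L) ∧
    (¬ ∃ x : ℍ[ℝ], x ≠ 0 ∧ (∃ c : ℝ, k1 x = c • x) ∧ (∃ c : ℝ, k2 x = c • x)) ∧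
    (¬ ∃ L : Submodule ℝ ℍ[ℝ], Module.finrank ℝ L = 1 ∧
        ∀ g ∈ K, L.map (LinearIsometryEquiv.toLinearEquiv g : ℍ[ℝ] →ₗ[ℝ] ℍ[ℝ]) = L) := by
  refine ⟨?_, ?_, ?_⟩
  · rintro ⟨L, hL, h1, h2⟩
    exact no_line L hL h1 h2
  · rintro ⟨x, hx, ⟨c, hc⟩, ⟨d, hd⟩⟩
    exact no_common_eigen x hx c d hc hd
  · rintro ⟨L, hL, h⟩
    exact no_line L hL (h k1 (Subgroup.subset_closure (by simp)))
      (h k2 (Subgroup.subset_closure (by simp)))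
end
end

section
/- The group K, i.e., the subgroup of ℝ-linear isometries of ℍ generated by k₁ : x ↦ −x̄ i and k₂ : x ↦ −j x̄ k, has order 16. -/
open Quaternion

noncomputable section

def m1 (z : ℤ × ℤ × ℤ × ℤ) : ℤ × ℤ × ℤ × ℤ := (-z.2.1, -z.1, z.2.2.2, -z.2.2.1)
def m2 (z : ℤ × ℤ × ℤ × ℤ) : ℤ × ℤ × ℤ × ℤ := (z.2.1, -z.1, -z.2.2.2, -z.2.2.1)
def emb (z : ℤ × ℤ × ℤ × ℤ) : ℍ[ℝ] := ⟨z.1, z.2.1, z.2.2.1, z.2.2.2⟩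

lemma emb_inj : Function.Injective emb := by
  rintro ⟨a, b, c, d⟩ ⟨a', b', c', d'⟩ h
  have h1 := congrArg QuaternionAlgebra.re h
  have h2 := congrArg QuaternionAlgebra.imI h
  have h3 := congrArg QuaternionAlgebra.imJ h
  have h4 := congrArg QuaternionAlgebra.imK h
  simp only [emb, Int.cast_inj] at h1 h2 h3 h4
  simp [h1, h2, h3, h4]

lemma my_mul_apply (f g : ℍ[ℝ] ≃ₗᵢ[ℝ] ℍ[ℝ]) (x : ℍ[ℝ]) : (f * g) x = f (g x) := rfl

lemma qi_c : qi.re = 0 ∧ qi.imI = 1 ∧ qi.imJ = 0 ∧ qi.imK = 0 := ⟨rfl, rfl, rfl, rfl⟩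
lemma qj_c : qj.re = 0 ∧ qj.imI = 0 ∧ qj.imJ = 1 ∧ qj.imK = 0 := ⟨rfl, rfl, rfl, rfl⟩
lemma qk_c : qk.re = 0 ∧ qk.imI = 0 ∧ qk.imJ = 0 ∧ qk.imK = 1 := ⟨rfl, rfl, rfl, rfl⟩

lemma k1_c (x : ℍ[ℝ]) : (k1 x).re = -x.imI ∧ (k1 x).imI = -x.re ∧ (k1 x).imJ = x.imK ∧
    (k1 x).imK = -x.imJ := by
  simp [qi_c]

lemma k2_c (x : ℍ[ℝ]) : (k2 x).re = x.imI ∧ (k2 x).imI = -x.re ∧ (k2 x).imJ = -x.imK ∧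
    (k2 x).imK = -x.imJ := by
  simp [qj_c, qk_c]

lemma emb_c (z) : (emb z).re = z.1 ∧ (emb z).imI = z.2.1 ∧ (emb z).imJ = z.2.2.1 ∧
    (emb z).imK = z.2.2.2 := ⟨rfl, rfl, rfl, rfl⟩

lemma k1_emb (z) : k1 (emb z) = emb (m1 z) := by
  ext <;> simp [k1_c, emb_c, m1, -k1_apply]

lemma k2_emb (z) : k2 (emb z) = emb (m2 z) := by
  ext <;> simp [k2_c, emb_c, m2, -k2_apply]

lemma k1_pow_emb (n : ℕ) (z) : (k1 ^ n) (emb z) = emb (m1^[n] z) := by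
  induction n generalizing z with
  | zero => simp
  | succ n ih => rw [pow_succ, my_mul_apply, k1_emb, ih, Function.iterate_succ_apply]

lemma k2_pow_emb (n : ℕ) (z) : (k2 ^ n) (emb z) = emb (m2^[n] z) := by
  induction n generalizing z with
  | zero => simp
  | succ n ih => rw [pow_succ, my_mul_apply, k2_emb, ih, Function.iterate_succ_apply]

lemma k1_four : k1 ^ 4 = 1 := by
  ext1 x
  ext <;> simp [pow_succ, my_mul_apply, k1_c, k2_c, -k1_apply, -k2_apply]

lemma k2_four : k2 ^ 4 = 1 := by
  ext1 x
  ext <;> simp [pow_succ, my_mul_apply, k1_c, k2_c, -k1_apply, -k2_apply]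

lemma k2_k1 : k2 * k1 = k1 ^ 3 * k2 ^ 3 := by
  ext1 x
  ext <;> simp [pow_succ, my_mul_apply, k1_c, k2_c, -k1_apply, -k2_apply]

lemma k2_k1_sq : Commute k2 (k1 ^ 2) := by
  change _ * _ = _ * _
  ext1 x
  ext <;> simp [pow_succ, my_mul_apply, k1_c, k2_c, -k1_apply, -k2_apply]

def kf (p : Fin 4 × Fin 4) : ℍ[ℝ] ≃ₗᵢ[ℝ] ℍ[ℝ] := k1 ^ p.1.val * k2 ^ p.2.val

lemma m_inj : ∀ p q : Fin 4 × Fin 4,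
    m1^[p.1.val] (m2^[p.2.val] (1, 2, 3, 4)) = m1^[q.1.val] (m2^[q.2.val] (1, 2, 3, 4)) → p = q := by
  decide +kernel

lemma kf_inj : Function.Injective kf := by
  intro p q h
  apply m_inj
  apply emb_inj
  have := congrArg (fun g => g (emb (1, 2, 3, 4))) h
  simpa only [kf, my_mul_apply, k1_pow_emb, k2_pow_emb] using this

lemma mem_range (a b : ℕ) : k1 ^ a * k2 ^ b ∈ Set.range kf := by
  refine ⟨(⟨a % 4, Nat.mod_lt _ (by norm_num)⟩, ⟨b % 4, Nat.mod_lt _ (by norm_num)⟩), ?_⟩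
  simp only [kf]
  rw [← pow_eq_pow_mod a k1_four, ← pow_eq_pow_mod b k2_four]

lemma mul1 {g} (h : g ∈ Set.range kf) : k1 * g ∈ Set.range kf := by
  obtain ⟨⟨a, b⟩, rfl⟩ := h
  simp only [kf]
  rw [← mul_assoc, ← pow_succ']
  exact mem_range _ _

lemma mul2 {g} (h : g ∈ Set.range kf) : k2 * g ∈ Set.range kf := by
  obtain ⟨⟨a, b⟩, rfl⟩ := h
  simp only [kf]
  generalize a.val = a
  generalize b.val = b
  obtain ⟨m, rfl | rfl⟩ := Nat.even_or_odd' a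
  · rw [← mul_assoc, pow_mul, (k2_k1_sq.pow_right m).eq, ← pow_mul, mul_assoc, ← pow_succ']
    exact mem_range _ _
  · rw [← mul_assoc, pow_succ, ← mul_assoc, pow_mul, (k2_k1_sq.pow_right m).eq, ← pow_mul,
      mul_assoc _ k2 k1, k2_k1, ← mul_assoc, ← pow_add, mul_assoc, ← pow_add]
    exact mem_range _ _

lemma K_eq : (K : Set (ℍ[ℝ] ≃ₗᵢ[ℝ] ℍ[ℝ])) = Set.range kf := by
  have i1 : k1⁻¹ = k1 * (k1 * k1) := by
    rw [inv_eq_iff_mul_eq_one, ← k1_four]; simp only [pow_succ, pow_zero, one_mul, mul_assoc]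
  have i2 : k2⁻¹ = k2 * (k2 * k2) := by
    rw [inv_eq_iff_mul_eq_one, ← k2_four]; simp only [pow_succ, pow_zero, one_mul, mul_assoc]
  apply Set.Subset.antisymm
  · intro g hg
    refine Subgroup.closure_induction_left (p := fun g _ => g ∈ Set.range kf) ?_ ?_ ?_ hg
    · simpa using mem_range 0 0
    · rintro x (rfl | rfl) y _ hy
      · exact mul1 hy
      · exact mul2 hy
    · rintro x (rfl | rfl) y _ hy
      · rw [i1, mul_assoc, mul_assoc]; exact mul1 (mul1 (mul1 hy))
      · rw [i2, mul_assoc, mul_assoc]; exact mul2 (mul2 (mul2 hy))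
  · rintro _ ⟨p, rfl⟩
    exact K.mul_mem (K.pow_mem (Subgroup.subset_closure (by simp)) _)
      (K.pow_mem (Subgroup.subset_closure (by simp)) _)

/-- The group `K` generated by `k₁ : x ↦ −x̄ i` and `k₂ : x ↦ −j x̄ k` has order 16. -/
theorem stmt_6 : Nat.card K = 16 := by
  have h : Nat.card (K : Set (ℍ[ℝ] ≃ₗᵢ[ℝ] ℍ[ℝ])) = 16 := by
    rw [K_eq, Nat.card_range_of_injective kf_inj]
    simp
  exact h
end
end

section
/- The only 2-dimensional ℝ-subspaces of ℍ invariant under the map k₁ : x ↦ −x̄ i are V₁ = spanℝ{1, i} and V₂ = spanℝ{j, k}. Consequently, V₁ and V₂ are the only 2-dimensional subspaces of ℍ invariant under every element of the group K generated by k₁ and k₂ : x ↦ −j x̄ k. -/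
open Quaternion

noncomputable section

@[simp] lemma qi_re : qi.re = 0 := rfl
@[simp] lemma qi_imI : qi.imI = 1 := rfl
@[simp] lemma qi_imJ : qi.imJ = 0 := rfl
@[simp] lemma qi_imK : qi.imK = 0 := rfl
@[simp] lemma qj_re : qj.re = 0 := rfl
@[simp] lemma qj_imI : qj.imI = 0 := rfl
@[simp] lemma qj_imJ : qj.imJ = 1 := rfl
@[simp] lemma qj_imK : qj.imK = 0 := rfl
@[simp] lemma qk_re : qk.re = 0 := rfl
@[simp] lemma qk_imI : qk.imI = 0 := rfl
@[simp] lemma qk_imJ : qk.imJ = 0 := rfl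
@[simp] lemma qk_imK : qk.imK = 1 := rfl

lemma mem_V1 (x : ℍ[ℝ]) : x ∈ Submodule.span ℝ {1, qi} ↔ x.imJ = 0 ∧ x.imK = 0 := by
  rw [Submodule.mem_span_pair]
  constructor
  · rintro ⟨a, b, rfl⟩
    simp
  · rintro ⟨h1, h2⟩
    refine ⟨x.re, x.imI, ?_⟩
    ext <;> simp [h1, h2]

lemma mem_V2 (x : ℍ[ℝ]) : x ∈ Submodule.span ℝ {qj, qk} ↔ x.re = 0 ∧ x.imI = 0 := by
  rw [Submodule.mem_span_pair]
  constructor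
  · rintro ⟨a, b, rfl⟩
    simp
  · rintro ⟨h1, h2⟩
    refine ⟨x.imJ, x.imK, ?_⟩
    ext <;> simp [h1, h2]

lemma finrank_V1 : Module.finrank ℝ (Submodule.span ℝ {(1 : ℍ[ℝ]), qi}) = 2 := by
  have h : LinearIndependent ℝ ![(1 : ℍ[ℝ]), qi] := by
    rw [LinearIndependent.pair_iff]
    intro s t h
    have h1 := congrArg QuaternionAlgebra.re h
    have h2 := congrArg QuaternionAlgebra.imI h
    simp at h1 h2
    exact ⟨h1, h2⟩
  have := finrank_span_eq_card h
  rw [Matrix.range_cons_cons_empty] at this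
  simpa using this

lemma finrank_V2 : Module.finrank ℝ (Submodule.span ℝ {qj, qk}) = 2 := by
  have h : LinearIndependent ℝ ![qj, qk] := by
    rw [LinearIndependent.pair_iff]
    intro s t h
    have h1 := congrArg QuaternionAlgebra.imJ h
    have h2 := congrArg QuaternionAlgebra.imK h
    simp at h1 h2
    exact ⟨h1, h2⟩
  have := finrank_span_eq_card h
  rw [Matrix.range_cons_cons_empty] at this
  simpa using this

lemma map_eq_of_forall (g : ℍ[ℝ] ≃ₗᵢ[ℝ] ℍ[ℝ]) (L : Submodule ℝ ℍ[ℝ])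
    (h : ∀ x ∈ L, g x ∈ L) :
    L.map (g.toLinearEquiv : ℍ[ℝ] →ₗ[ℝ] ℍ[ℝ]) = L := by
  apply Submodule.eq_of_le_of_finrank_le
  · rintro _ ⟨x, hx, rfl⟩
    exact h x hx
  · exact (LinearEquiv.finrank_map_eq g.toLinearEquiv L).ge

lemma k1_re (x : ℍ[ℝ]) : (k1 x).re = -x.imI := by
  simp

lemma k1_imI (x : ℍ[ℝ]) : (k1 x).imI = -x.re := by
  simp

lemma k1_imJ (x : ℍ[ℝ]) : (k1 x).imJ = x.imK := by
  simp

lemma k1_imK (x : ℍ[ℝ]) : (k1 x).imK = -x.imJ := by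
  simp

lemma k2_re (x : ℍ[ℝ]) : (k2 x).re = x.imI := by
  simp

lemma k2_imI (x : ℍ[ℝ]) : (k2 x).imI = -x.re := by
  simp

lemma k2_imJ (x : ℍ[ℝ]) : (k2 x).imJ = -x.imK := by
  simp

lemma k2_imK (x : ℍ[ℝ]) : (k2 x).imK = -x.imJ := by
  simp

lemma inv_k1 (L : Submodule ℝ ℍ[ℝ]) (hL : Module.finrank ℝ L = 2)
    (h : L.map (k1.toLinearEquiv : ℍ[ℝ] →ₗ[ℝ] ℍ[ℝ]) = L) :
    L = Submodule.span ℝ {1, qi} ∨ L = Submodule.span ℝ {qj, qk} := by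
  have hk : ∀ x ∈ L, k1 x ∈ L := fun x hx => by
    rw [← h]; exact ⟨x, hx, rfl⟩
  by_cases hc : ∀ x ∈ L, x.imJ = 0 ∧ x.imK = 0
  · left
    apply Submodule.eq_of_le_of_finrank_le
    · intro x hx
      exact (mem_V1 x).2 (hc x hx)
    · rw [finrank_V1, hL]
  · right
    push Not at hc
    obtain ⟨x, hx, hne⟩ := hc
    symm
    apply Submodule.eq_of_le_of_finrank_le
    · intro y hy
      obtain ⟨y1, y2⟩ := (mem_V2 y).1 hy
      have hu : x - k1 (k1 x) ∈ L := L.sub_mem hx (hk _ (hk _ hx))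
      have hv := hk _ hu
      have hn : x.imJ ^ 2 + x.imK ^ 2 ≠ 0 := by
        intro h0
        have a : x.imJ = 0 := by nlinarith [sq_nonneg x.imJ, sq_nonneg x.imK]
        have b : x.imK = 0 := by nlinarith [sq_nonneg x.imJ, sq_nonneg x.imK]
        exact hne a b
      have key : y = ((y.imJ * x.imJ + y.imK * x.imK) / (2 * (x.imJ ^ 2 + x.imK ^ 2))) •
            (x - k1 (k1 x)) +
          ((y.imJ * x.imK - y.imK * x.imJ) / (2 * (x.imJ ^ 2 + x.imK ^ 2))) •
            k1 (x - k1 (k1 x)) := by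
        ext
        · simp [y1, -k1_apply, k1_re, k1_imI, k1_imJ, k1_imK]
        · simp [y2, -k1_apply, k1_re, k1_imI, k1_imJ, k1_imK]
        · simp [-k1_apply, k1_re, k1_imI, k1_imJ, k1_imK]
          field_simp
          ring
        · simp [-k1_apply, k1_re, k1_imI, k1_imJ, k1_imK]
          field_simp
          ring
      rw [key]
      exact L.add_mem (L.smul_mem _ hu) (L.smul_mem _ hv)
    · rw [finrank_V2, hL]

lemma k1_inv (L : Submodule ℝ ℍ[ℝ])
    (h : L = Submodule.span ℝ {1, qi} ∨ L = Submodule.span ℝ {qj, qk}) :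
    L.map (k1.toLinearEquiv : ℍ[ℝ] →ₗ[ℝ] ℍ[ℝ]) = L := by
  apply map_eq_of_forall
  intro x hx
  rcases h with rfl | rfl
  · rw [mem_V1] at hx ⊢
    simp [hx.1, hx.2]
  · rw [mem_V2] at hx ⊢
    simp [hx.1, hx.2]

lemma k2_inv (L : Submodule ℝ ℍ[ℝ])
    (h : L = Submodule.span ℝ {1, qi} ∨ L = Submodule.span ℝ {qj, qk}) :
    L.map (k2.toLinearEquiv : ℍ[ℝ] →ₗ[ℝ] ℍ[ℝ]) = L := by
  apply map_eq_of_forall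
  intro x hx
  rcases h with rfl | rfl
  · rw [mem_V1] at hx ⊢
    simp [hx.1, hx.2]
  · rw [mem_V2] at hx ⊢
    simp [hx.1, hx.2]

lemma K_inv (L : Submodule ℝ ℍ[ℝ])
    (h : L = Submodule.span ℝ {1, qi} ∨ L = Submodule.span ℝ {qj, qk})
    (g : ℍ[ℝ] ≃ₗᵢ[ℝ] ℍ[ℝ]) (hg : g ∈ K) :
    L.map (LinearIsometryEquiv.toLinearEquiv g : ℍ[ℝ] →ₗ[ℝ] ℍ[ℝ]) = L := by
  unfold K at hg
  induction hg using Subgroup.closure_induction with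
  | mem x hx =>
    rcases hx with rfl | rfl
    · exact k1_inv L h
    · exact k2_inv L h
  | one => exact map_eq_of_forall 1 L (fun x hx => hx)
  | mul a b _ _ ha hb =>
    apply map_eq_of_forall
    intro x hx
    have hbx : b x ∈ L := by
      rw [← hb]; exact ⟨x, hx, rfl⟩
    have hab : a (b x) ∈ L := by
      rw [← ha]; exact ⟨b x, hbx, rfl⟩
    exact hab
  | inv a _ ha =>
    apply map_eq_of_forall
    intro x hx
    rw [← ha] at hx
    obtain ⟨y, hy, rfl⟩ := hx
    have e : a⁻¹ (a y) = y := a.symm_apply_apply y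
    exact e.symm ▸ hy

/-- The only 2-dimensional ℝ-subspaces of `ℍ` invariant under `k₁` are
`V₁ = span {1, i}` and `V₂ = span {j, k}`; consequently these are also the only
2-dimensional subspaces invariant under every element of `K`. -/
theorem stmt_10 :
    (∀ L : Submodule ℝ ℍ[ℝ], Module.finrank ℝ L = 2 →
      (L.map (k1.toLinearEquiv : ℍ[ℝ] →ₗ[ℝ] ℍ[ℝ]) = L ↔
        L = Submodule.span ℝ {1, qi} ∨ L = Submodule.span ℝ {qj, qk})) ∧
    (∀ L : Submodule ℝ ℍ[ℝ], Module.finrank ℝ L = 2 →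
      ((∀ g ∈ K, L.map (LinearIsometryEquiv.toLinearEquiv g : ℍ[ℝ] →ₗ[ℝ] ℍ[ℝ]) = L) ↔
        L = Submodule.span ℝ {1, qi} ∨ L = Submodule.span ℝ {qj, qk})) := by
  refine ⟨fun L hL => ⟨inv_k1 L hL, k1_inv L⟩, fun L hL => ⟨fun h => ?_, K_inv L⟩⟩
  exact inv_k1 L hL (h k1 (Subgroup.subset_closure (by simp)))
end
end

section
/- Let m, n ≥ 1 be integers and let s be an integer with −m ≤ 2s ≤ n − m. Define unit quaternions z₁ = exp(−(2π/m)·i), z₂ = exp(−((m+2s)π/(mn))·i), w₂ = exp((π/n)·i), and let g₁, g₂ be the ℝ-linear isometries of ℍ given by g₁(x) = z̄₁ x and g₂(x) = z̄₂ x w₂. Then the subgroup G of the group of ℝ-linear isometric automorphisms of ℍ generated by g₁ and g₂ satisfies: either there is a 1-dimensional ℝ-subspace of ℍ invariant under every element of G, or some element of G has no invariant 1-dimensional ℝ-subspace. -/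
open Quaternion

noncomputable section

/-- For quaternions `z, w`, the ℝ-linear map `[z,w] : x ↦ z̄ x w` on `ℍ`. -/
def qrot (z w : ℍ[ℝ]) : ℍ[ℝ] →ₗ[ℝ] ℍ[ℝ] :=
  (LinearMap.mulRight ℝ w).comp (LinearMap.mulLeft ℝ (star z))

/-- The unit quaternion `exp(θ·i) = cos θ + (sin θ)·i`. -/
def expi (θ : ℝ) : ℍ[ℝ] := ⟨Real.cos θ, Real.sin θ, 0, 0⟩

lemma norm_expi (θ : ℝ) : ‖expi θ‖ = 1 := by
  have h : normSq (expi θ) = 1 := by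
    rw [Quaternion.normSq_def']
    simp [expi, Real.cos_sq_add_sin_sq θ]
  have h2 := Quaternion.normSq_eq_norm_mul_self (expi θ)
  nlinarith [norm_nonneg (expi θ)]

/-- The rotation `[z,w] : x ↦ z̄ x w` of `ℍ` by unit quaternions `z, w`, as a linear isometry
equivalence. -/
def rotIso (z w : ℍ[ℝ]) (hz : ‖z‖ = 1) (hw : ‖w‖ = 1) : ℍ[ℝ] ≃ₗᵢ[ℝ] ℍ[ℝ] :=
  toIso (qrot z w) (fun x => by
    simp [qrot, norm_mul, Quaternion.norm_star, hz, hw])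

def qI : ℍ[ℝ] := ⟨0, 1, 0, 0⟩
def qJ : ℍ[ℝ] := ⟨0, 0, 1, 0⟩

@[simp] lemma qI_re : qI.re = 0 := rfl
@[simp] lemma qI_imI : qI.imI = 1 := rfl
@[simp] lemma qI_imJ : qI.imJ = 0 := rfl
@[simp] lemma qI_imK : qI.imK = 0 := rfl
@[simp] lemma qJ_re : qJ.re = 0 := rfl
@[simp] lemma qJ_imI : qJ.imI = 0 := rfl
@[simp] lemma qJ_imJ : qJ.imJ = 1 := rfl
@[simp] lemma qJ_imK : qJ.imK = 0 := rfl
@[simp] lemma expi_re (θ : ℝ) : (expi θ).re = Real.cos θ := rfl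
@[simp] lemma expi_imI (θ : ℝ) : (expi θ).imI = Real.sin θ := rfl
@[simp] lemma expi_imJ (θ : ℝ) : (expi θ).imJ = 0 := rfl
@[simp] lemma expi_imK (θ : ℝ) : (expi θ).imK = 0 := rfl

/-- isometries commuting with left and right multiplication by `i` -/
def commI : Subgroup (ℍ[ℝ] ≃ₗᵢ[ℝ] ℍ[ℝ]) where
  carrier := {g | ∀ x, g (qI * x) = qI * g x ∧ g (x * qI) = g x * qI}
  mul_mem' := by
    intro a b ha hb x
    simp only [LinearIsometryEquiv.coe_mul, Function.comp]
    exact ⟨by rw [(hb x).1, (ha _).1], by rw [(hb x).2, (ha _).2]⟩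
  one_mem' := by intro x; simp
  inv_mem' := by
    intro a ha x
    have e : ∀ y, a (a⁻¹ y) = y := fun y => a.apply_symm_apply y
    constructor
    · apply a.injective
      rw [(ha _).1, e, e]
    · apply a.injective
      rw [(ha _).2, e, e]

/-- stabilizer of a subspace -/
def stabL (L : Submodule ℝ ℍ[ℝ]) : Subgroup (ℍ[ℝ] ≃ₗᵢ[ℝ] ℍ[ℝ]) where
  carrier := {g | L.map (LinearIsometryEquiv.toLinearEquiv g : ℍ[ℝ] →ₗ[ℝ] ℍ[ℝ]) = L}
  mul_mem' := by
    intro a b ha hb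
    simp only [Set.mem_ofPred_eq] at *
    conv_rhs => rw [← ha, ← hb, ← Submodule.map_comp]
    rfl
  one_mem' := Submodule.map_id L
  inv_mem' := by
    intro a ha
    simp only [Set.mem_ofPred_eq] at *
    conv_lhs => rw [← ha, ← Submodule.map_comp]
    have e : ((a⁻¹).toLinearEquiv : ℍ[ℝ] →ₗ[ℝ] ℍ[ℝ]).comp
        (a.toLinearEquiv : ℍ[ℝ] →ₗ[ℝ] ℍ[ℝ]) = LinearMap.id :=
      LinearMap.ext fun x => a.symm_apply_apply x
    exact (congrArg (fun f => L.map f) e).trans (Submodule.map_id L)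

lemma mem_stab_span (g : ℍ[ℝ] ≃ₗᵢ[ℝ] ℍ[ℝ]) (u : ℍ[ℝ]) (c : ℝ) (hc : c ≠ 0)
    (h : g u = c • u) : g ∈ stabL (Submodule.span ℝ {u}) := by
  change Submodule.map _ _ = _
  rw [Submodule.map_span, Set.image_singleton]
  change Submodule.span ℝ {g u} = _
  rw [h]
  exact Submodule.span_singleton_smul_eq (IsUnit.mk0 c hc) u

lemma rot_mem (θ φ : ℝ) (w : ℍ[ℝ]) (hz) (hw) (hwI : w * qI = qI * w) :
    rotIso (expi θ) w hz hw ∈ commI := by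
  intro x
  have e : ∀ y, rotIso (expi θ) w hz hw y = star (expi θ) * y * w := fun y => rfl
  have h1 : star (expi θ) * qI = qI * star (expi θ) := by
    ext <;> simp
  rw [e, e, e]
  constructor
  · rw [← mul_assoc, h1]; simp only [mul_assoc]
  · simp only [mul_assoc]; rw [hwI]

lemma key (g : ℍ[ℝ] ≃ₗᵢ[ℝ] ℍ[ℝ]) (hg : g ∈ commI) (L : Submodule ℝ ℍ[ℝ])
    (hL : Module.finrank ℝ L = 1)
    (h : L.map (LinearIsometryEquiv.toLinearEquiv g : ℍ[ℝ] →ₗ[ℝ] ℍ[ℝ]) = L) :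
    g ∈ stabL (Submodule.span ℝ {(1 : ℍ[ℝ])}) ∨ g ∈ stabL (Submodule.span ℝ {qJ}) := by
  obtain ⟨⟨v, hvL⟩, hv0, hv⟩ := finrank_eq_one_iff'.1 hL
  have hgv : g v ∈ L := by
    rw [← h]; exact ⟨v, hvL, rfl⟩
  obtain ⟨c, hc⟩ := hv ⟨g v, hgv⟩
  have hc : c • v = g v := congrArg Subtype.val hc
  have hv0 : v ≠ 0 := fun h => hv0 (Subtype.ext h)
  have hc0 : c ≠ 0 := by
    rintro rfl
    rw [zero_smul] at hc
    exact hv0 (g.map_eq_zero_iff.1 hc.symm)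
  have hI : ∀ x, g (qI * x) = qI * g x := fun x => (hg x).1
  have hI' : ∀ x, g (x * qI) = g x * qI := fun x => (hg x).2
  -- general: two complex multiples
  have gen : ∀ (u : ℍ[ℝ]) (a b : ℝ), (a ≠ 0 ∨ b ≠ 0) →
      g (a • u + b • (qI * u)) = c • (a • u + b • (qI * u)) → g u = c • u := by
    intro u a b hab hh
    rw [map_add, map_smul, map_smul, hI] at hh
    have h2 : (a * a + b * b) • (g u - c • u) = 0 := by
      have hII : ∀ y : ℍ[ℝ], qI * (qI * y) = - y := by
        intro y; ext <;> simp
      set d := g u - c • u with hd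
      have hgu : g u = d + c • u := by rw [hd]; abel
      have h3 : a • d + b • (qI * d) = 0 := by
        rw [hgu] at hh
        rw [mul_add, mul_smul_comm] at hh
        have := sub_eq_zero.2 hh
        rw [← this]; module
      have h4 : a • (a • d + b • (qI * d)) - b • (qI * (a • d + b • (qI * d))) = 0 := by
        rw [h3]; simp
      rw [mul_add, mul_smul_comm, mul_smul_comm, hII] at h4
      rw [← h4]; module
    have h5 : a * a + b * b ≠ 0 := by
      rcases hab with h | h
      · have := mul_self_pos.2 h; nlinarith [mul_self_nonneg b]
      · have := mul_self_pos.2 h; nlinarith [mul_self_nonneg a]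
    exact sub_eq_zero.1 ((smul_eq_zero.1 h2).resolve_left h5)
  have hconj : g (qI * v * qI) = c • (qI * v * qI) := by
    rw [hI', hI, ← hc]; simp
  by_cases h01 : v.re ≠ 0 ∨ v.imI ≠ 0
  · left
    refine mem_stab_span g _ c hc0 (gen 1 v.re v.imI h01 ?_)
    have : v.re • (1 : ℍ[ℝ]) + v.imI • (qI * 1) = (1/2 : ℝ) • (v - qI * v * qI) := by
      ext <;> simp <;> try ring
    rw [this, map_smul, map_sub, hconj, ← hc]; module
  · right
    have h23 : v.imJ ≠ 0 ∨ v.imK ≠ 0 := by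
      by_contra hcon
      push Not at h01 hcon
      exact hv0 (by ext <;> simp [h01, hcon])
    refine mem_stab_span g _ c hc0 (gen qJ v.imJ v.imK h23 ?_)
    have : v.imJ • qJ + v.imK • (qI * qJ) = (1/2 : ℝ) • (v + qI * v * qI) := by
      ext <;> simp <;> try ring
    rw [this, map_smul, map_add, hconj, ← hc]; module

/-- The torus translation group with parameters `(m, n, s)` either leaves some 1-dimensional
subspace of `ℍ` invariant, or contains an element with no invariant 1-dimensional subspace. -/
theorem stmt_19 (m n s : ℤ) (hm : 1 ≤ m) (hn : 1 ≤ n)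
    (hs₁ : -m ≤ 2 * s) (hs₂ : 2 * s ≤ n - m) :
    let g₁ : ℍ[ℝ] ≃ₗᵢ[ℝ] ℍ[ℝ] :=
      rotIso (expi (-(2 * Real.pi / m))) 1 (norm_expi _) norm_one
    let g₂ : ℍ[ℝ] ≃ₗᵢ[ℝ] ℍ[ℝ] :=
      rotIso (expi (-(((m : ℝ) + 2 * s) * Real.pi / (m * n)))) (expi (Real.pi / n))
        (norm_expi _) (norm_expi _)
    let G : Subgroup (ℍ[ℝ] ≃ₗᵢ[ℝ] ℍ[ℝ]) := Subgroup.closure {g₁, g₂}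
    (∃ L : Submodule ℝ ℍ[ℝ], Module.finrank ℝ L = 1 ∧
        ∀ g ∈ G, L.map (LinearIsometryEquiv.toLinearEquiv g : ℍ[ℝ] →ₗ[ℝ] ℍ[ℝ]) = L) ∨
      (∃ g ∈ G, ¬ ∃ L : Submodule ℝ ℍ[ℝ], Module.finrank ℝ L = 1 ∧
        L.map (LinearIsometryEquiv.toLinearEquiv g : ℍ[ℝ] →ₗ[ℝ] ℍ[ℝ]) = L) := by
  intro g₁ g₂ G
  have hG : G ≤ commI := by
    refine (Subgroup.closure_le _).2 ?_
    rintro g (rfl | rfl)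
    · exact rot_mem _ 0 _ _ _ (by simp)
    · exact rot_mem _ 0 _ _ _ (by ext <;> simp)
  by_contra hcon
  push Not at hcon
  obtain ⟨hl, hr⟩ := hcon
  have hall : ∀ g ∈ G, g ∈ stabL (Submodule.span ℝ {(1 : ℍ[ℝ])}) ∨
      g ∈ stabL (Submodule.span ℝ {qJ}) := by
    intro g hg
    obtain ⟨L, h1, h2⟩ := hr g hg
    exact key g (hG hg) L h1 h2
  have hJ : qJ ≠ 0 := fun h => by
    have := congrArg QuaternionAlgebra.imJ h
    simp at this
  obtain ⟨a, ha, ha'⟩ := hl _ (finrank_span_singleton (K := ℝ) (one_ne_zero (α := ℍ[ℝ])))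
  obtain ⟨b, hb, hb'⟩ := hl _ (finrank_span_singleton (K := ℝ) hJ)
  have haJ := (hall a ha).resolve_left ha'
  have hb1 := (hall b hb).resolve_right hb'
  rcases hall (a * b) (G.mul_mem ha hb) with h | h
  · exact ha' (((stabL _).mul_mem_cancel_right hb1).1 h)
  · exact hb' (((stabL _).mul_mem_cancel_left haJ).1 h)
end
end
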